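/- Let G be a finite connected bridgeless simple graph and let e be an edge of G. Then there exists a pairwise-disconnecting set of G containing e if and only if the graph G − e obtained by deleting e has a bridge. Moreover, in that case G has a unique maximal pairwise-disconnecting set containing e, namely the union of {e} and the set of all bridges of G − e. -/

import Mathlib

/-!
Deleting a bridge from a graph turns no other edge into a bridge, because no cycle passes through
a bridge. Hence, if `f` and `g` are bridges of `G - e` but `f` is not a bridge of `G`, then `e` is a
bridge of `G - f`, and `g`, being a bridge of `G - f - e`, is already a bridge of `G - f`. So the
bridges of `G - e` disconnect `G` pairwise, and the pairwise-disconnecting sets containing `e` are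
the sets of at least two elements that contain `e` and otherwise only bridges of `G - e`.
-/

open LaurentPolynomial Finset

/-- `S` is a pairwise-disconnecting set of `G`: a set of at least two edges of `G` such that
deleting any two distinct edges of `S` disconnects the graph. -/
def IsPDSet {V : Type*} (G : SimpleGraph V) (S : Finset (Sym2 V)) : Prop :=
  ↑S ⊆ G.edgeSet ∧ 2 ≤ S.card ∧
    ∀ e ∈ S, ∀ f ∈ S, e ≠ f → ¬ (G.deleteEdges {e, f}).Connected

/-- A pairwise-disconnecting set is maximal if no pairwise-disconnecting set contains it
as a proper subset. -/
def IsMaxPDSet {V : Type*} (G : SimpleGraph V) (S : Finset (Sym2 V)) : Prop :=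
  IsPDSet G S ∧ ∀ S' : Finset (Sym2 V), IsPDSet G S' → S ⊆ S' → S' = S

open scoped Classical in
/-- `SMfin G e` is the union of `{e}` and the set of all bridges of `G - e`. -/
noncomputable def SMfin {V : Type*} [Fintype V] [DecidableEq V] (G : SimpleGraph V)
    (e : Sym2 V) : Finset (Sym2 V) :=
  insert e (Finset.univ.filter fun f => (G.deleteEdges {e}).IsBridge f)

section

open SimpleGraph

variable {V : Type*} {G : SimpleGraph V} {e f g : Sym2 V} {S : Finset (Sym2 V)}

theorem mem_edgeSet_of_isBridge (hG : G.Preconnected) (he : G.IsBridge e) : e ∈ G.edgeSet := by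
  induction e with
  | h u v => exact he.reachable_iff_adj.1 (hG u v)

theorem connected_deleteEdges_singleton_iff (hG : G.Connected) :
    (G.deleteEdges {e}).Connected ↔ ¬ G.IsBridge e := by
  induction e with
  | h u v =>
    exact ⟨fun h he ↦ he (h.preconnected u v), hG.connected_delete_edge_of_not_isBridge⟩

theorem not_connected_deleteEdges_pair_iff (hG : G.Connected) :
    ¬ (G.deleteEdges {e, f}).Connected ↔ G.IsBridge e ∨ (G.deleteEdges {e}).IsBridge f := by
  have hdel : G.deleteEdges {e, f} = (G.deleteEdges {e}).deleteEdges {f} := by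
    rw [deleteEdges_deleteEdges, Set.singleton_union]
  by_cases he : G.IsBridge e
  · have hdisc : ¬ (G.deleteEdges {e}).Connected :=
      fun h ↦ (connected_deleteEdges_singleton_iff hG).1 h he
    simpa only [he, true_or, iff_true, hdel] using fun h ↦ hdisc (h.mono (deleteEdges_le _))
  · have hconn := (connected_deleteEdges_singleton_iff hG).2 he
    rw [hdel, connected_deleteEdges_singleton_iff hconn, not_not, or_iff_right he]

theorem isBridge_of_isBridge_deleteEdges (he : G.IsBridge e) (hf : f ∈ G.edgeSet)
    (hfe : (G.deleteEdges {e}).IsBridge f) : G.IsBridge f := by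
  refine (isBridge_iff_forall_cycle_notMem hf).2 fun u p hp hfp ↦ ?_
  have hep : e ∉ p.edges := he.notMem_edges_of_isCycle hp
  refine hfe.notMem_edges_of_isCycle (p := p.toDeleteEdge e hep) (hp.toDeleteEdges _ _ _) ?_
  simpa only [Walk.edges_transfer] using hfp

theorem not_connected_deleteEdges_pair_of_isBridge (hG : G.Connected) (he : ¬ G.IsBridge e)
    (hf : (G.deleteEdges {e}).IsBridge f) (hg : (G.deleteEdges {e}).IsBridge g) (hfg : f ≠ g) :
    ¬ (G.deleteEdges {f, g}).Connected := by
  refine (not_connected_deleteEdges_pair_iff hG).2 (or_iff_not_imp_left.2 fun hf' ↦ ?_)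
  have hef : (G.deleteEdges {f}).IsBridge e := by
    refine ((not_connected_deleteEdges_pair_iff hG).1 ?_).resolve_left hf'
    rw [Set.pair_comm]
    exact (not_connected_deleteEdges_pair_iff hG).2 (.inr hf)
  have hgG : g ∈ G.edgeSet := edgeSet_mono (deleteEdges_le _) <|
    mem_edgeSet_of_isBridge ((connected_deleteEdges_singleton_iff hG).2 he).preconnected hg
  have hgf : g ∈ (G.deleteEdges {f}).edgeSet := by
    rw [edgeSet_deleteEdges]
    exact ⟨hgG, hfg.symm⟩
  have hgfe : ((G.deleteEdges {f}).deleteEdges {e}).IsBridge g :=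
    hg.anti (deleteEdges_mono (deleteEdges_le _))
  exact isBridge_of_isBridge_deleteEdges hef hgf hgfe

/-- The series class of `e` in `G`: the edge `e` together with all bridges of `G - e`. It is the
candidate for the maximal pairwise-disconnecting set containing `e`, taken as a `Set` because it
may be infinite when `V` is. -/
def seriesClass (G : SimpleGraph V) (e : Sym2 V) : Set (Sym2 V) :=
  insert e {f | (G.deleteEdges {e}).IsBridge f}

theorem coe_SMfin [Fintype V] [DecidableEq V] (G : SimpleGraph V) (e : Sym2 V) :
    (SMfin G e : Set (Sym2 V)) = seriesClass G e := by
  simp [SMfin, seriesClass]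

theorem self_mem_seriesClass (G : SimpleGraph V) (e : Sym2 V) : e ∈ seriesClass G e :=
  Set.mem_insert e _

theorem seriesClass_subset_edgeSet (hG : G.Connected) (he : e ∈ G.edgeSet)
    (hbe : ¬ G.IsBridge e) : seriesClass G e ⊆ G.edgeSet :=
  Set.insert_subset he fun _ hf ↦ edgeSet_mono (deleteEdges_le _) <|
    mem_edgeSet_of_isBridge ((connected_deleteEdges_singleton_iff hG).2 hbe).preconnected hf

theorem pairwise_seriesClass (hG : G.Connected) (he : ¬ G.IsBridge e) :
    (seriesClass G e).Pairwise fun f g ↦ ¬ (G.deleteEdges {f, g}).Connected := by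
  refine Set.pairwise_insert.2 ⟨fun f hf g hg hfg ↦
    not_connected_deleteEdges_pair_of_isBridge hG he hf hg hfg, fun f hf _ ↦ ?_⟩
  have hef := (not_connected_deleteEdges_pair_iff hG).2 (.inr hf)
  exact ⟨hef, Set.pair_comm e f ▸ hef⟩

theorem isPDSet_iff_subset_seriesClass (hG : G.Connected) (he : e ∈ G.edgeSet)
    (hbe : ¬ G.IsBridge e) (heS : e ∈ S) :
    IsPDSet G S ↔ 2 ≤ #S ∧ (S : Set (Sym2 V)) ⊆ seriesClass G e := by
  constructor
  · rintro ⟨-, hcard, hdisc⟩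
    refine ⟨hcard, fun f hf ↦ or_iff_not_imp_left.2 fun hfe ↦ ?_⟩
    have hef := hdisc e heS f hf (Ne.symm hfe)
    exact ((not_connected_deleteEdges_pair_iff hG).1 hef).resolve_left hbe
  · rintro ⟨hcard, hS⟩
    exact ⟨hS.trans (seriesClass_subset_edgeSet hG he hbe), hcard,
      fun f hf g hg hfg ↦ pairwise_seriesClass hG hbe (hS hf) (hS hg) hfg⟩

theorem exists_isBridge_deleteEdges_iff_nontrivial_seriesClass (he : ¬ G.IsBridge e) :
    (∃ f, (G.deleteEdges {e}).IsBridge f) ↔ (seriesClass G e).Nontrivial := by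
  constructor
  · rintro ⟨f, hf⟩
    have hfe : f ≠ e := by
      rintro rfl
      exact he (isBridge_deleteEdges_singleton.1 hf)
    exact ⟨e, self_mem_seriesClass G e, f, .inr hf, hfe.symm⟩
  · intro h
    obtain ⟨f, hf, hfe⟩ := h.exists_ne e
    exact ⟨f, hf.resolve_left hfe⟩

theorem exists_isPDSet_iff (hG : G.Connected) (he : e ∈ G.edgeSet) (hbe : ¬ G.IsBridge e) :
    (∃ S, IsPDSet G S ∧ e ∈ S) ↔ (seriesClass G e).Nontrivial := by
  classical
  constructor
  · rintro ⟨S, hS, heS⟩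
    obtain ⟨hcard, hsub⟩ := (isPDSet_iff_subset_seriesClass hG he hbe heS).1 hS
    exact (Finset.one_lt_card_iff_nontrivial.1 hcard).mono hsub
  · intro h
    obtain ⟨f, hf, hfe⟩ := h.exists_ne e
    refine ⟨{e, f}, (isPDSet_iff_subset_seriesClass hG he hbe (mem_insert_self e _)).2 ?_,
      mem_insert_self e _⟩
    rw [card_pair hfe.symm, coe_pair]
    exact ⟨le_rfl, Set.pair_subset (self_mem_seriesClass G e) hf⟩

theorem isMaxPDSet_and_mem_iff (hG : G.Connected) (he : e ∈ G.edgeSet) (hbe : ¬ G.IsBridge e)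
    (hnt : (seriesClass G e).Nontrivial) :
    IsMaxPDSet G S ∧ e ∈ S ↔ (S : Set (Sym2 V)) = seriesClass G e := by
  classical
  constructor
  · rintro ⟨⟨hS, hmax⟩, heS⟩
    obtain ⟨hcard, hsub⟩ := (isPDSet_iff_subset_seriesClass hG he hbe heS).1 hS
    refine hsub.antisymm fun f hf ↦ ?_
    have hinsert : IsPDSet G (insert f S) := by
      refine (isPDSet_iff_subset_seriesClass hG he hbe (mem_insert_of_mem heS)).2
        ⟨hcard.trans (card_le_card (subset_insert f S)), ?_⟩
      rw [coe_insert]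
      exact Set.insert_subset hf hsub
    exact insert_eq_self.1 (hmax _ hinsert (subset_insert f S))
  · intro hS
    have heS : e ∈ S := mem_coe.1 (hS ▸ self_mem_seriesClass G e)
    have hcard : 2 ≤ #S := one_lt_card_iff_nontrivial.2 (by rwa [Finset.Nontrivial, hS])
    refine ⟨⟨(isPDSet_iff_subset_seriesClass hG he hbe heS).2 ⟨hcard, hS.subset⟩,
      fun S' hS' hSS' ↦ ?_⟩, heS⟩
    have hsub := ((isPDSet_iff_subset_seriesClass hG he hbe (hSS' heS)).1 hS').2
    exact (coe_subset.1 (hsub.trans hS.superset)).antisymm hSS'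

end

theorem exists_pdset_iff_bridge_general {V : Type*} (G : SimpleGraph V) (hconn : G.Connected)
    (e : Sym2 V) (he : e ∈ G.edgeSet) (hbe : ¬ G.IsBridge e) :
    ((∃ S : Finset (Sym2 V), IsPDSet G S ∧ e ∈ S) ↔
        ∃ f : Sym2 V, (G.deleteEdges {e}).IsBridge f) ∧
      ((∃ f : Sym2 V, (G.deleteEdges {e}).IsBridge f) →
        ∀ S : Finset (Sym2 V),
          IsMaxPDSet G S ∧ e ∈ S ↔ (S : Set (Sym2 V)) = seriesClass G e) := by
  rw [exists_isBridge_deleteEdges_iff_nontrivial_seriesClass hbe]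
  exact ⟨exists_isPDSet_iff hconn he hbe, fun hnt _ ↦ isMaxPDSet_and_mem_iff hconn he hbe hnt⟩

/-- For an edge `e` of a finite connected bridgeless simple graph `G`, there is a
pairwise-disconnecting set containing `e` iff `G - e` has a bridge; in that case the unique
maximal pairwise-disconnecting set containing `e` is `{e}` together with all bridges of
`G - e`. -/
theorem exists_pdset_iff_bridge {V : Type*} [Fintype V] [DecidableEq V]
    (G : SimpleGraph V) (hconn : G.Connected) (hbl : ∀ g : Sym2 V, ¬ G.IsBridge g)
    (e : Sym2 V) (he : e ∈ G.edgeSet) :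
    ((∃ S : Finset (Sym2 V), IsPDSet G S ∧ e ∈ S) ↔
        ∃ f : Sym2 V, (G.deleteEdges {e}).IsBridge f) ∧
      ((∃ f : Sym2 V, (G.deleteEdges {e}).IsBridge f) →
        (IsMaxPDSet G (SMfin G e) ∧ e ∈ SMfin G e ∧
          ∀ S : Finset (Sym2 V), IsMaxPDSet G S → e ∈ S → S = SMfin G e)) := by
  obtain ⟨hiff, hmax⟩ := exists_pdset_iff_bridge_general G hconn e he (hbl e)
  exact ⟨hiff, fun hf ↦ and_assoc.1 ⟨(hmax hf _).2 (coe_SMfin G e), fun S hS heS ↦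
    coe_injective (((hmax hf S).1 ⟨hS, heS⟩).trans (coe_SMfin G e).symm)⟩⟩
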